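/- arXiv:2009.10602 — 2 statements merged into one kernel-verified Lean document; each statement's English description precedes it below -/
import Mathlib

section
/- Let G be a finite group, p a prime, and F an algebraically closed field of characteristic p. If every simple FG-module is finite-dimensional of dimension strictly less than p, then G has a normal Sylow p-subgroup. -/
/-!
If `x` has `p`-power order, then `x - 1` is nilpotent in `FG`, so its `(p - 1)`-st power, which in
characteristic `p` is `1 + x + ⋯ + x ^ (p - 1)`, annihilates every simple module of dimension less
than `p` and lies in the Jacobson radical. Hence `∑ i < p, x ^ i * g` is nilpotent for every `g`.
The coefficient at `1` is a trace on `FG`, and a trace in characteristic `p` is additive on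
`p ^ k`-th powers of sums, so for large `k` the number of `i < p` with `(x ^ i * g) ^ p ^ k = 1` is
divisible by `p`. If `g` also has `p`-power order, then `i = 0` is counted, so every `i < p` is, and
`i = 1` shows that `x * g` has `p`-power order. So the elements of `p`-power order form a subgroup.
-/

open Equiv Finset

section Trace

theorem sum_eq_sum_filter_fixed {α M : Type*} [Fintype α] [DecidableEq α] [AddCommGroup M]
    {p k : ℕ} [Fact p.Prime] (hM : ∀ m : M, p • m = 0) {σ : Perm α} (hσ : σ ^ p ^ k = 1)
    {φ : α → M} (hφ : ∀ x, φ (σ x) = φ x) :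
    ∑ x, φ x = ∑ x with σ x = x, φ x := by
  classical
  have card_fiber (m : M) : #{x | φ x = m} ≡ #{x | σ x = x ∧ φ x = m} [MOD p] := by
    let τ : Perm {x // φ x = m} := σ.subtypePerm fun x => by rw [hφ]
    have hτ : τ ^ p ^ k = 1 := by
      ext x
      simp [τ, Perm.subtypePerm_pow, hσ]
    have card_fixed : #τ.supportᶜ = #{x | σ x = x ∧ φ x = m} := by
      refine card_bij (fun x _ => x.1) ?_ ?_ ?_ <;> simp +contextual [τ, Subtype.ext_iff]
    simpa only [card_fixed, Fintype.card_subtype] using (Perm.card_compl_support_modEq hτ).symm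
  have maps_to (s : Finset α) : ∀ x ∈ s, φ x ∈ univ.image φ := by simp
  rw [← sum_fiberwise_of_maps_to (maps_to _), ← sum_fiberwise_of_maps_to (maps_to _)]
  refine sum_congr rfl fun m _ => ?_
  rw [sum_eq_card_nsmul (b := m) (by simp), sum_eq_card_nsmul (b := m) (by simp), filter_filter]
  exact nsmul_eq_nsmul_iff_modEq.mpr
    ((card_fiber m).of_dvd (addOrderOf_dvd_of_nsmul_eq_zero (hM m)))

theorem finRotate_pow_self (n : ℕ) : finRotate n ^ n = 1 := by
  refine Equiv.ext fun i => ?_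
  have : NeZero n := ⟨i.pos.ne'⟩
  have pow_apply (m : ℕ) : (finRotate n ^ m) i = i + m • 1 := by
    induction m with
    | zero => simp
    | succ m ih => rw [pow_succ', Perm.mul_apply, ih, finRotate_apply, succ_nsmul, add_assoc]
  have nsmul_one : n • (1 : Fin n) = 0 := by
    simpa only [Fintype.card_fin] using card_nsmul_eq_zero (x := (1 : Fin n))
  rw [pow_apply, nsmul_one, add_zero, Perm.one_apply]

theorem comp_finRotate_eq_self_iff {α : Type*} {n : ℕ} [NeZero n] {v : Fin n → α} :
    v ∘ finRotate n = v ↔ ∃ a, v = Function.const _ a := by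
  obtain ⟨n, rfl⟩ := Nat.exists_eq_succ_of_ne_zero (NeZero.ne n)
  refine ⟨fun h => ⟨v 0, funext fun i => ?_⟩, ?_⟩
  · induction i using Fin.induction with
    | zero => rfl
    | succ i ih =>
      calc v i.succ = v (finRotate _ i.castSucc) := by simp
        _ = v i.castSucc := congrFun h i.castSucc
        _ = v 0 := ih
  · rintro ⟨a, rfl⟩
    rfl

theorem map_prod_ofFn_comp_finRotate {A M : Type*} [Monoid A] {τ : A → M}
    (hτ : ∀ a b, τ (a * b) = τ (b * a)) {n : ℕ} (a : Fin n → A) :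
    τ (List.ofFn (a ∘ finRotate n)).prod = τ (List.ofFn a).prod := by
  rcases n with - | n
  · simp
  rw [List.ofFn_succ', List.ofFn_succ, List.concat_eq_append, List.prod_append,
    List.prod_singleton, List.prod_cons, hτ]
  simp

theorem sum_pow_eq_sum_prod_ofFn {A ι : Type*} [Semiring A] [Fintype ι] (a : ι → A) (n : ℕ) :
    (∑ i, a i) ^ n = ∑ v : Fin n → ι, (List.ofFn (a ∘ v)).prod := by
  classical
  rw [← MultilinearMap.mkPiAlgebraFin_apply_const (R := ℕ), MultilinearMap.map_sum]
  rfl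

theorem map_sum_pow_prime_pow {A M ι : Type*} [Semiring A] [AddCommGroup M] [Fintype ι]
    {p : ℕ} [Fact p.Prime] (hM : ∀ m : M, p • m = 0) {τ : A →+ M}
    (hτ : ∀ a b, τ (a * b) = τ (b * a)) (a : ι → A) (k : ℕ) :
    τ ((∑ i, a i) ^ p ^ k) = ∑ i, τ (a i ^ p ^ k) := by
  classical
  have : NeZero (p ^ k) := ⟨pow_ne_zero _ (Fact.out : p.Prime).ne_zero⟩
  let σ : Perm (Fin (p ^ k) → ι) := MulAction.toPermHom _ _ (DomMulAct.mk (finRotate (p ^ k)))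
  have hσ : σ ^ p ^ k = 1 := by
    rw [← map_pow, ← DomMulAct.mk_pow, finRotate_pow_self, DomMulAct.mk_one, map_one]
  have σ_apply (v : Fin (p ^ k) → ι) : σ v = v ∘ finRotate (p ^ k) := rfl
  have fixed_eq : ({v | σ v = v} : Finset (Fin (p ^ k) → ι)) = univ.image (Function.const _) := by
    ext v
    simp [σ_apply, comp_finRotate_eq_self_iff, eq_comm (b := v)]
  rw [sum_pow_eq_sum_prod_ofFn, map_sum,
    sum_eq_sum_filter_fixed hM hσ fun v => map_prod_ofFn_comp_finRotate hτ (a ∘ v), fixed_eq,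
    sum_image fun _ _ _ _ h => Function.const_injective h]
  simp [Function.comp_def]

end Trace

section GroupAlgebra

theorem charP_monoidAlgebra (R G : Type*) [Semiring R] [MulOneClass G] (p : ℕ) [CharP R p] :
    CharP (MonoidAlgebra R G) p :=
  charP_of_injective_ringHom (f := MonoidAlgebra.singleOneRingHom)
    (MonoidAlgebra.single_right_injective (m := 1)) p

theorem coeff_one_mul_comm {R G : Type*} [CommSemiring R] [Group G] (a b : MonoidAlgebra R G) :
    (a * b).coeff 1 = (b * a).coeff 1 := by
  induction a using MonoidAlgebra.induction_linear with
  | zero => simp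
  | add a a' ha ha' => simp [add_mul, mul_add, ha, ha']
  | single g r =>
    simp [MonoidAlgebra.coeff_single_mul_apply, MonoidAlgebra.coeff_mul_single_apply, mul_comm]

variable {R G ι : Type*} [CommRing R] [Group G] [DecidableEq G] [Fintype ι] {p : ℕ}
  [Fact p.Prime] [CharP R p]

theorem coeff_one_sum_of_pow_prime_pow (g : ι → G) (k : ℕ) :
    ((∑ i, MonoidAlgebra.of R G (g i)) ^ p ^ k).coeff 1 = #{i | g i ^ p ^ k = 1} := by
  let τ : MonoidAlgebra R G →+ R :=
    (Finsupp.applyAddHom 1).comp MonoidAlgebra.coeffAddEquiv.toAddMonoidHom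
  calc τ ((∑ i, MonoidAlgebra.of R G (g i)) ^ p ^ k)
      = ∑ i, τ (MonoidAlgebra.of R G (g i) ^ p ^ k) :=
        map_sum_pow_prime_pow (by simp) coeff_one_mul_comm _ k
    _ = #{i | g i ^ p ^ k = 1} := by simp [τ, MonoidAlgebra.single_pow, Finsupp.single_apply]

theorem prime_dvd_card_pow_eq_one {g : ι → G} {k : ℕ}
    (h : (∑ i, MonoidAlgebra.of R G (g i)) ^ p ^ k = 0) : p ∣ #{i | g i ^ p ^ k = 1} := by
  rw [← CharP.cast_eq_zero_iff R, ← coeff_one_sum_of_pow_prime_pow, h, MonoidAlgebra.coeff_zero,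
    Finsupp.zero_apply]

end GroupAlgebra

section Radical

theorem pow_eq_zero_of_isNilpotent_of_finrank_le {K V : Type*} [DivisionRing K] [AddCommGroup V]
    [Module K V] [FiniteDimensional K V] {d : ℕ} (hd : Module.finrank K V ≤ d)
    {T : Module.End K V} (hT : IsNilpotent T) : T ^ d = 0 := by
  obtain ⟨m, hm⟩ := hT
  refine pow_eq_zero_of_le hd (LinearMap.ker_eq_top.mp (top_le_iff.mp ?_))
  simpa [hm] using T.ker_pow_le_ker_pow_finrank m

theorem pow_mem_jacobson_of_isNilpotent {K A : Type*} [Field K] [Ring A] [Algebra K A] {d : ℕ}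
    (hd : ∀ m : Ideal A, m.IsMaximal →
      FiniteDimensional K (A ⧸ m) ∧ Module.finrank K (A ⧸ m) ≤ d)
    {a : A} (ha : IsNilpotent a) : a ^ d ∈ Ring.jacobson A := by
  rw [Ring.jacobson_eq_sInf_isMaximal, Submodule.mem_sInf]
  intro m hm
  obtain ⟨_, hle⟩ := hd m hm
  have lsmul_pow : Algebra.lsmul K K (A ⧸ m) (a ^ d) = 0 := by
    rw [map_pow, pow_eq_zero_of_isNilpotent_of_finrank_le hle (ha.map _)]
  have smul_mk_one : a ^ d • (Submodule.Quotient.mk 1 : A ⧸ m) = 0 :=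
    LinearMap.congr_fun lsmul_pow _
  rwa [← Submodule.Quotient.mk_smul, smul_eq_mul, mul_one, Submodule.Quotient.mk_eq_zero]
    at smul_mk_one

end Radical

theorem geom_sum_eq_sub_one_pow_of_charP {R : Type*} [Ring R] (p : ℕ) [Fact p.Prime] [CharP R p]
    (x : R) : ∑ i ∈ range p, x ^ i = (x - 1) ^ (p - 1) := by
  have cyclotomic_eq : ∑ i ∈ range p, (Polynomial.X : Polynomial (ZMod p)) ^ i =
      (Polynomial.X - 1) ^ (p - 1) := by
    rw [← Polynomial.cyclotomic_prime, ← Polynomial.cyclotomic_one,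
      ← Polynomial.cyclotomic_mul_prime_eq_pow_of_not_dvd _ (Fact.out : p.Prime).not_dvd_one,
      one_mul]
  let := ZMod.algebra R p
  simpa using congrArg (Polynomial.aeval x) cyclotomic_eq

/-- `x` is a `p`-element: its order is a power of `p`, expressed as `x ^ p ^ k = 1` for some `k`.
The theorem amounts to these elements being closed under multiplication. -/
def IsPElement {G : Type*} [Monoid G] (p : ℕ) (x : G) : Prop :=
  ∃ k, x ^ p ^ k = 1

namespace IsPElement

variable {G : Type*} {p : ℕ}

theorem isNilpotent_of_sub_one (R : Type*) [Ring R] [Monoid G] [Fact p.Prime] [CharP R p] {x : G}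
    (hx : IsPElement p x) : IsNilpotent (MonoidAlgebra.of R G x - 1) := by
  obtain ⟨k, hk⟩ := hx
  have := charP_monoidAlgebra R G p
  refine ⟨p ^ k, ?_⟩
  rw [sub_pow_char_pow_of_commute p k (Commute.one_right _), ← map_pow, hk, map_one, one_pow,
    sub_self]

variable [Group G]

theorem mul_of_isNilpotent {R : Type*} [CommRing R] [Fact p.Prime] [CharP R p] {x g : G}
    (hg : IsPElement p g)
    (h : IsNilpotent ((MonoidAlgebra.of R G x - 1) ^ (p - 1) * MonoidAlgebra.of R G g)) :
    IsPElement p (x * g) := by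
  classical
  have hp : p.Prime := Fact.out
  have := charP_monoidAlgebra R G p
  have sum_eq : ∑ i : Fin p, MonoidAlgebra.of R G (x ^ (i : ℕ) * g) =
      (MonoidAlgebra.of R G x - 1) ^ (p - 1) * MonoidAlgebra.of R G g := by
    rw [← geom_sum_eq_sub_one_pow_of_charP, ← Fin.sum_univ_eq_sum_range, Finset.sum_mul]
    simp only [map_mul, map_pow]
  obtain ⟨n, hn⟩ := hg
  obtain ⟨N, hN⟩ := h
  have pow_eq_zero : (∑ i : Fin p, MonoidAlgebra.of R G (x ^ (i : ℕ) * g)) ^ p ^ (n + N) = 0 :=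
    sum_eq ▸ pow_eq_zero_of_le ((Nat.le_add_left N n).trans (Nat.lt_pow_self hp.one_lt).le) hN
  let S : Finset (Fin p) := {i | (x ^ (i : ℕ) * g) ^ p ^ (n + N) = 1}
  have dvd_card : p ∣ #S := prime_dvd_card_pow_eq_one pow_eq_zero
  have zero_mem : ⟨0, hp.pos⟩ ∈ S := by simp [S, pow_add, pow_mul, hn]
  have S_eq_univ : S = univ := by
    rw [← card_eq_iff_eq_univ, Fintype.card_fin]
    exact (card_finset_fin_le S).antisymm (Nat.le_of_dvd (card_pos.mpr ⟨_, zero_mem⟩) dvd_card)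
  have one_mem : ⟨1, hp.one_lt⟩ ∈ S := S_eq_univ ▸ mem_univ _
  exact ⟨n + N, by simpa [S] using one_mem⟩

theorem exists_normal_sylow
    (hmul : ∀ x y : G, IsPElement p x → IsPElement p y → IsPElement p (x * y)) :
    ∃ P : Sylow p G, (P : Subgroup G).Normal := by
  let H : Subgroup G :=
    { carrier := {x | IsPElement p x}
      mul_mem' := hmul _ _
      one_mem' := ⟨0, one_pow _⟩
      inv_mem' := fun ⟨k, hk⟩ => ⟨k, by rw [inv_pow, hk, inv_one]⟩ }
  have isPGroup : IsPGroup p H := fun ⟨_, k, hk⟩ => ⟨k, Subtype.ext hk⟩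
  have normal : H.Normal :=
    ⟨fun _ ⟨k, hk⟩ g => ⟨k, by rw [conj_pow, hk, mul_one, mul_inv_cancel]⟩⟩
  have le_of_isPGroup {Q : Subgroup G} (hQ : IsPGroup p Q) : Q ≤ H := fun y hy =>
    (hQ ⟨y, hy⟩).imp fun _ hk => congrArg Subtype.val hk
  exact ⟨⟨H, isPGroup, fun hQ hHQ => (le_of_isPGroup hQ).antisymm hHQ⟩, normal⟩

end IsPElement

theorem normal_sylow_of_simple_modules_small_general.{u, v} {p : ℕ} [Fact p.Prime]
    (F : Type u) [Field F] [CharP F p] (G : Type v) [Group G] [Finite G]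
    (hdim : ∀ (V : Type (max u v)) [AddCommGroup V] [Module (MonoidAlgebra F G) V]
      [Module F V] [IsScalarTower F (MonoidAlgebra F G) V],
      IsSimpleModule (MonoidAlgebra F G) V → Module.finrank F V < p) :
    ∃ P : Sylow p G, (P : Subgroup G).Normal := by
  refine IsPElement.exists_normal_sylow fun x g hx hg => hg.mul_of_isNilpotent (R := F) ?_
  have finrank_le (m : Ideal (MonoidAlgebra F G)) (hm : m.IsMaximal) :
      Module.finrank F (MonoidAlgebra F G ⧸ m) ≤ p - 1 :=
    Nat.le_sub_one_of_lt (hdim _ (isSimpleModule_iff_isCoatom.mpr hm.out))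
  have sub_one_pow_mem : (MonoidAlgebra.of F G x - 1) ^ (p - 1) ∈ Ring.jacobson _ :=
    pow_mem_jacobson_of_isNilpotent (fun m hm => ⟨inferInstance, finrank_le m hm⟩)
      (hx.isNilpotent_of_sub_one F)
  have : IsArtinianRing (MonoidAlgebra F G) := .of_finite F _
  obtain ⟨N, hN⟩ := IsSemiprimaryRing.isNilpotent (R := MonoidAlgebra F G)
  have mul_mem := Ideal.mul_mem_right (MonoidAlgebra.of F G g) _ sub_one_pow_mem
  exact ⟨N, by simpa [hN] using Ideal.pow_mem_pow mul_mem N⟩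

/-- Let `G` be a finite group, `p` a prime, and `F` an algebraically
closed field of characteristic `p`.  If every simple `FG`-module is finite-dimensional
over `F` of dimension strictly less than `p`, then `G` has a normal Sylow `p`-subgroup. -/
theorem normal_sylow_of_simple_modules_small
    (p : ℕ) (hp : p.Prime)
    (F : Type) [Field F] [IsAlgClosed F] [CharP F p]
    (G : Type) [Group G] [Finite G]
    (hdim : ∀ (V : Type) [AddCommGroup V] [Module (MonoidAlgebra F G) V]
      [Module F V] [IsScalarTower F (MonoidAlgebra F G) V],
      IsSimpleModule (MonoidAlgebra F G) V →
        FiniteDimensional F V ∧ Module.finrank F V < p) :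
    ∃ P : Sylow p G, (P : Subgroup G).Normal :=
  have : Fact p.Prime := ⟨hp⟩
  normal_sylow_of_simple_modules_small_general F G fun V _ _ _ _ hV => (hdim V hV).2
end

section
/- Let G be a finite group, p a prime, F a field of characteristic p, and P a Sylow p-subgroup of G. Then the dimension over F of every finite-dimensional projective FG-module is divisible by |P|; in particular, every nonzero projective FG-module has dimension at least |P|. -/
/-! Let `H` be a finite `p`-subgroup of `G`. In characteristic `p`, a nonzero representation of `H`
has a nonzero invariant vector, so an `H`-equivariant map is injective as soon as it is injective on
invariants. A projective module `V` over the group algebra of `G` is a direct summand of a free one,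
so every `H`-invariant vector of `V` is a norm `∑ h, h • w`. A projection of `V` onto its invariants
`Vᴴ`, and a linear choice of preimages of `Vᴴ` under the norm, induce equivariant maps in both
directions between `V` and the space of functions `H → Vᴴ`. Both are injective on invariants, hence
injective, and so `dim V = |H| dim Vᴴ`. -/

open Representation MonoidAlgebra

section Translation

variable (k G W : Type*) [Semiring k] [Monoid G] [AddCommMonoid W] [Module k W]

/-- The representation of `G` on functions `G → W` by right translation, `(g • c) x = c (x * g)`.
It is the representation coinduced from `W` along the trivial subgroup. -/
def rightTranslation : Representation k G (G → W) where
  toFun g := LinearMap.funLeft k W (· * g)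
  map_one' := by ext; simp
  map_mul' g h := by ext; simp [mul_assoc]

variable {k G W}

@[simp]
theorem rightTranslation_apply (g : G) (c : G → W) (x : G) :
    rightTranslation k G W g c x = c (x * g) :=
  rfl

end Translation

theorem eq_const_of_mem_invariants_rightTranslation {k G W : Type*} [CommRing k] [Group G]
    [AddCommGroup W] [Module k W] {c : G → W} (hc : c ∈ (rightTranslation k G W).invariants) :
    c = Function.const G (c 1) := by
  ext x
  simpa using congrFun (hc x) 1

section ToTranslation

variable {k G V W : Type*} [Semiring k] [Monoid G] [AddCommMonoid V] [Module k V]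
  [AddCommMonoid W] [Module k W]

/-- The equivariant map `V → (G → W)` attached to a linear map `π : V → W` by Frobenius
reciprocity. -/
def toTranslation (ρ : Representation k G V) (π : V →ₗ[k] W) :
    ρ.IntertwiningMap (rightTranslation k G W) where
  toLinearMap := LinearMap.pi fun x ↦ π ∘ₗ ρ x
  isIntertwining' g := by ext; simp

@[simp]
theorem toTranslation_apply (ρ : Representation k G V) (π : V →ₗ[k] W) (v : V) (x : G) :
    toTranslation ρ π v x = π (ρ x v) :=
  rfl

end ToTranslation

section OfTranslation

variable {k G V W : Type*} [CommSemiring k] [Group G] [Fintype G] [AddCommMonoid V] [Module k V]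
  [AddCommMonoid W] [Module k W]

/-- The equivariant map `(G → W) → V` attached to a linear map `s : W → V` by Frobenius
reciprocity, for finite `G`. -/
def ofTranslation (ρ : Representation k G V) (s : W →ₗ[k] V) :
    (rightTranslation k G W).IntertwiningMap ρ where
  toLinearMap := ∑ x, ρ x⁻¹ ∘ₗ s ∘ₗ LinearMap.proj x
  isIntertwining' g := by
    refine LinearMap.ext fun c ↦ ?_
    simp only [LinearMap.comp_apply, LinearMap.sum_apply, LinearMap.proj_apply,
      rightTranslation_apply, map_sum, ← Module.End.mul_apply, ← map_mul]
    exact Fintype.sum_equiv (Equiv.mulRight g) _ _ fun x ↦ by simp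

theorem ofTranslation_apply (ρ : Representation k G V) (s : W →ₗ[k] V) (c : G → W) :
    ofTranslation ρ s c = ∑ x, ρ x⁻¹ (s (c x)) := by
  change (∑ x, ρ x⁻¹ ∘ₗ s ∘ₗ LinearMap.proj x : (G → W) →ₗ[k] V) c = _
  simp

theorem ofTranslation_const (ρ : Representation k G V) (s : W →ₗ[k] V) (w : W) :
    ofTranslation ρ s (Function.const G w) = ρ.norm (s w) := by
  simp only [ofTranslation_apply, Function.const_apply, Representation.norm, LinearMap.sum_apply]
  exact Fintype.sum_equiv (Equiv.inv G) _ _ fun _ ↦ rfl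

end OfTranslation

section PGroup

variable {p : ℕ} [Fact p.Prime] {k H V W : Type*} [CommRing k] [Group H]
  [AddCommGroup V] [Module k V] [AddCommGroup W] [Module k W]

theorem exists_mem_invariants_ne_zero_of_dvd_card
    (hH : IsPGroup p H) (ρ : Representation k H V) [Finite V] (hV : p ∣ Nat.card V) :
    ∃ v ∈ ρ.invariants, v ≠ 0 := by
  let : MulAction H V := MulAction.compHom V ρ
  obtain ⟨v, hv, hv0⟩ := hH.exists_fixed_point_of_prime_dvd_card_of_fixed_point V hV
    (a := 0) fun g ↦ map_zero (ρ g)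
  exact ⟨v, hv, hv0.symm⟩

theorem exists_mem_invariants_ne_zero [CharP k p] [Finite H] [Nontrivial V]
    (hH : IsPGroup p H) (ρ : Representation k H V) :
    ∃ v ∈ ρ.invariants, v ≠ 0 := by
  -- The `𝔽_p`-span of the orbit of a nonzero vector is a finite nonzero subrepresentation.
  let : Algebra (ZMod p) k := ZMod.algebra k p
  let : Module (ZMod p) V := Module.compHom V (algebraMap (ZMod p) k)
  obtain ⟨v, hv⟩ := exists_ne (0 : V)
  let σ : Representation (ZMod p) H V :=
    { toFun g := (ρ g).toAddMonoidHom.toZModLinearMap p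
      map_one' := by ext; simp
      map_mul' g h := by ext; simp }
  let S := Submodule.span (ZMod p) (Set.range fun g ↦ σ g v)
  have hvS : v ∈ S := Submodule.subset_span ⟨1, by simp⟩
  have hS (g : H) : S ≤ S.comap (σ g) := by
    refine Submodule.span_le.2 ?_
    rintro _ ⟨h, rfl⟩
    exact Submodule.subset_span ⟨g * h, by simp⟩
  have : Module.Finite (ZMod p) S := .span_of_finite _ (Set.finite_range _)
  have : Finite S := Module.finite_of_finite (ZMod p)
  have : Nontrivial S := ⟨⟨v, hvS⟩, 0, fun h ↦ hv (congrArg Subtype.val h)⟩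
  have hcard : p ∣ Nat.card S := by
    rw [Module.natCard_eq_pow_finrank (K := ZMod p), Nat.card_zmod]
    exact dvd_pow_self _ Module.finrank_pos.ne'
  obtain ⟨s, hs, hs0⟩ :=
    exists_mem_invariants_ne_zero_of_dvd_card hH (σ.subrepresentation S hS) hcard
  exact ⟨s, fun g ↦ congrArg Subtype.val (hs g), fun h ↦ hs0 (Subtype.ext h)⟩

theorem injective_of_forall_mem_invariants [CharP k p] [Finite H] (hH : IsPGroup p H)
    {ρ : Representation k H V} {σ : Representation k H W} (f : ρ.IntertwiningMap σ)
    (hf : ∀ v ∈ ρ.invariants, f v = 0 → v = 0) :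
    Function.Injective f := by
  refine (injective_iff_map_eq_zero f).2 fun v hv ↦ by_contra fun hv0 ↦ ?_
  have : Nontrivial f.ker.toSubmodule := ⟨⟨v, hv⟩, 0, fun h ↦ hv0 (congrArg Subtype.val h)⟩
  obtain ⟨w, hw, hw0⟩ := exists_mem_invariants_ne_zero hH f.ker.toRepresentation
  exact hw0 (Subtype.ext (hf w (fun g ↦ congrArg Subtype.val (hw g)) w.2))

end PGroup

section Dimension

variable {p : ℕ} [Fact p.Prime] {F H V : Type*} [Field F] [CharP F p] [Group H]
  [AddCommGroup V] [Module F V] [FiniteDimensional F V]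

theorem finrank_le_card_mul_finrank_invariants [Finite H] (hH : IsPGroup p H)
    (ρ : Representation F H V) :
    Module.finrank F V ≤ Nat.card H * Module.finrank F ρ.invariants := by
  have := Fintype.ofFinite H
  obtain ⟨π, hπ⟩ :=
    ρ.invariants.subtype.exists_leftInverse_of_injective ρ.invariants.ker_subtype
  have hinj : Function.Injective (toTranslation ρ π).toLinearMap := by
    refine injective_of_forall_mem_invariants hH _ fun v hv h0 ↦ ?_
    have hπv : π v = ⟨v, hv⟩ := LinearMap.congr_fun hπ ⟨v, hv⟩
    have hπ0 : π v = 0 := by simpa using congrFun h0 1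
    exact congrArg Subtype.val (hπv.symm.trans hπ0)
  simpa [Module.finrank_pi_fintype] using LinearMap.finrank_le_finrank_of_injective hinj

variable [Fintype H]

theorem card_mul_finrank_invariants_le_finrank (hH : IsPGroup p H) {ρ : Representation F H V}
    (hρ : ρ.invariants ≤ LinearMap.range ρ.norm) :
    Nat.card H * Module.finrank F ρ.invariants ≤ Module.finrank F V := by
  obtain ⟨s, hs⟩ : ∃ s : ρ.invariants →ₗ[F] V, ρ.norm ∘ₗ s = ρ.invariants.subtype := by
    obtain ⟨s, hs⟩ := Module.projective_lifting_property ρ.norm.rangeRestrict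
      (Submodule.inclusion hρ) ρ.norm.surjective_rangeRestrict
    exact ⟨s, by
      rw [← Submodule.subtype_comp_inclusion _ _ hρ, ← hs, ← LinearMap.comp_assoc,
        LinearMap.subtype_comp_codRestrict]⟩
  have hinj : Function.Injective (ofTranslation ρ s).toLinearMap := by
    refine injective_of_forall_mem_invariants hH _ fun c hc h0 ↦ ?_
    rw [eq_const_of_mem_invariants_rightTranslation hc, ofTranslation_const] at h0
    have hc1 : c 1 = 0 := Subtype.ext ((LinearMap.congr_fun hs (c 1)).symm.trans h0)
    rw [eq_const_of_mem_invariants_rightTranslation hc, hc1]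
    rfl
  simpa [Module.finrank_pi_fintype] using LinearMap.finrank_le_finrank_of_injective hinj

theorem finrank_eq_card_mul_finrank_invariants (hH : IsPGroup p H) {ρ : Representation F H V}
    (hρ : ρ.invariants ≤ LinearMap.range ρ.norm) :
    Module.finrank F V = Nat.card H * Module.finrank F ρ.invariants :=
  (finrank_le_card_mul_finrank_invariants hH ρ).antisymm
    (card_mul_finrank_invariants_le_finrank hH hρ)

end Dimension

theorem representation_finsupp_apply {k G V ι : Type*} [CommSemiring k] [Monoid G] [AddCommMonoid V]
    [Module k V] (ρ : Representation k G V) (g : G) (w : ι →₀ V) (i : ι) :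
    ρ.finsupp ι g w i = ρ g (w i) := by
  classical
  induction w using Finsupp.induction_linear with
  | zero => simp
  | add w w' hw hw' => simp [hw, hw']
  | single j v => simp [Finsupp.single_apply, apply_ite (ρ g)]

theorem intertwiningMap_norm_apply {k G V W : Type*} [Semiring k] [Group G] [Fintype G]
    [AddCommMonoid V] [Module k V] [AddCommMonoid W] [Module k W] {ρ : Representation k G V}
    {σ : Representation k G W} (f : ρ.IntertwiningMap σ) (v : V) :
    f (ρ.norm v) = σ.norm (f v) := by
  simp [Representation.norm, f.isIntertwining]

section NormSurjective

variable {k H V W : Type*} [CommRing k] [Group H] [Fintype H]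
  [AddCommGroup V] [Module k V] [AddCommGroup W] [Module k W]
  {ρ : Representation k H V} {σ : Representation k H W}

theorem invariants_le_range_norm_of_leftInverse
    (hσ : σ.invariants ≤ LinearMap.range σ.norm) (f : σ.IntertwiningMap ρ)
    (g : ρ.IntertwiningMap σ) (hfg : Function.LeftInverse f g) :
    ρ.invariants ≤ LinearMap.range ρ.norm := by
  intro v hv
  have hgv : g v ∈ σ.invariants := fun h ↦ by rw [← g.isIntertwining, hv h]
  obtain ⟨w, hw⟩ := hσ hgv
  exact ⟨f w, by rw [← intertwiningMap_norm_apply, hw, hfg v]⟩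

theorem invariants_finsupp_le_range_norm (hρ : ρ.invariants ≤ LinearMap.range ρ.norm)
    (ι : Type*) : (ρ.finsupp ι).invariants ≤ LinearMap.range (ρ.finsupp ι).norm := by
  intro w hw
  have hwi (i : ι) : w i ∈ ρ.invariants := fun h ↦ by rw [← representation_finsupp_apply, hw h]
  choose v hv using fun i ↦ hρ (hwi i)
  refine ⟨∑ i ∈ w.support, Finsupp.single i (v i), ?_⟩
  have hsingle (i : ι) : (ρ.finsupp ι).norm (Finsupp.single i (v i)) = Finsupp.single i (w i) := by
    simp [← hv i, Representation.norm, Finsupp.single_finsetSum]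
  simp only [map_sum, hsingle]
  exact w.sum_single

end NormSurjective

section SubgroupRep

variable {k G : Type*} [CommSemiring k] [Group G] (H : Subgroup G) {V W : Type*}
  [AddCommMonoid V] [Module k V] [Module k[G] V] [IsScalarTower k k[G] V]
  [AddCommMonoid W] [Module k W] [Module k[G] W] [IsScalarTower k k[G] W]

variable (k V) in
/-- The representation of a subgroup `H` of `G` on a module over the group algebra of `G`. -/
noncomputable def subgroupRep : Representation k H V :=
  (ofModule' V).comp H.subtype

@[simp]
theorem subgroupRep_apply (h : H) (v : V) :
    subgroupRep k H V h v = single (h : G) (1 : k) • v := by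
  simp [subgroupRep, ofModule']

/-- A map linear over the group algebra of `G`, as an `H`-equivariant map. -/
noncomputable def subgroupRepMap (f : V →ₗ[k[G]] W) :
    (subgroupRep k H V).IntertwiningMap (subgroupRep k H W) where
  toLinearMap := f.restrictScalars k
  isIntertwining' h := by ext; simp

theorem subgroupRep_finsupp (ι : Type*) :
    subgroupRep k H (ι →₀ V) = (subgroupRep k H V).finsupp ι := by
  ext h : 1
  refine LinearMap.ext fun w ↦ Finsupp.ext fun i ↦ ?_
  simp [representation_finsupp_apply]

end SubgroupRep

section Projective

variable {k G : Type*} [CommRing k] [Group G] (H : Subgroup G) [Fintype H]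

theorem invariants_subgroupRep_groupAlgebra_le_range_norm :
    (subgroupRep k H k[G]).invariants ≤ LinearMap.range (subgroupRep k H k[G]).norm := by
  classical
  intro x hx
  have hcoeff (h : H) (g : G) : x.coeff ((h : G)⁻¹ * g) = x.coeff g := by
    simpa using congrArg (fun y ↦ y.coeff g) (hx h)
  obtain ⟨T, hT, -⟩ := H.exists_isComplement_right 1
  -- The norm of the restriction of `x` to a transversal of the right cosets of `H` is `x` itself.
  refine ⟨.ofCoeff (x.coeff.filter (· ∈ T)), MonoidAlgebra.ext (Finsupp.ext fun g ↦ ?_)⟩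
  obtain ⟨h, hh, huniq⟩ := Subgroup.isComplement_iff_existsUnique_inv_mul_mem.1 hT g
  have hmem (h' : H) : (h' : G)⁻¹ * g ∈ T ↔ h' = h := ⟨huniq h', fun e ↦ e ▸ hh⟩
  simp [Representation.norm, Finsupp.filter_apply, hcoeff, hmem]

theorem invariants_subgroupRep_free_le_range_norm (ι : Type*) :
    (subgroupRep k H (ι →₀ k[G])).invariants ≤
      LinearMap.range (subgroupRep k H (ι →₀ k[G])).norm := by
  rw [subgroupRep_finsupp]
  exact invariants_finsupp_le_range_norm (invariants_subgroupRep_groupAlgebra_le_range_norm H) ι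

theorem invariants_subgroupRep_le_range_norm (V : Type*) [AddCommGroup V] [Module k V]
    [Module k[G] V] [IsScalarTower k k[G] V] [Module.Projective k[G] V] :
    (subgroupRep k H V).invariants ≤ LinearMap.range (subgroupRep k H V).norm := by
  obtain ⟨g, hg⟩ := Module.projective_def.1 ‹Module.Projective k[G] V›
  exact invariants_le_range_norm_of_leftInverse (invariants_subgroupRep_free_le_range_norm H V)
    (subgroupRepMap H (Finsupp.linearCombination k[G] id)) (subgroupRepMap H g) hg

end Projective

theorem card_sylow_dvd_finrank_projective_general
    {p : ℕ} [Fact p.Prime] {F G V : Type*} [Field F] [CharP F p] [Group G]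
    {H : Subgroup G} [Finite H] (hH : IsPGroup p H)
    [AddCommGroup V] [Module F[G] V] [Module F V] [IsScalarTower F F[G] V]
    [FiniteDimensional F V] [Module.Projective F[G] V] :
    Nat.card H ∣ Module.finrank F V ∧ (Nontrivial V → Nat.card H ≤ Module.finrank F V) := by
  have := Fintype.ofFinite H
  have hdvd : Nat.card H ∣ Module.finrank F V :=
    ⟨_, finrank_eq_card_mul_finrank_invariants hH (invariants_subgroupRep_le_range_norm H V)⟩
  exact ⟨hdvd, fun _ ↦ Nat.le_of_dvd Module.finrank_pos hdvd⟩

/-- Let `G` be a finite group, `p` a prime, `F` a field of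
characteristic `p`, and `P` a Sylow `p`-subgroup of `G`.  The `F`-dimension of
every finite-dimensional projective `FG`-module is divisible by `|P|`; in
particular, a nonzero such module has dimension at least `|P|`. -/
theorem card_sylow_dvd_finrank_projective
    (p : ℕ) (hp : p.Prime)
    (F : Type) [Field F] [CharP F p]
    (G : Type) [Group G] [Finite G] (P : Sylow p G)
    (V : Type) [AddCommGroup V] [Module (MonoidAlgebra F G) V]
    [Module F V] [IsScalarTower F (MonoidAlgebra F G) V]
    [FiniteDimensional F V]
    (hproj : Module.Projective (MonoidAlgebra F G) V) :
    Nat.card (P : Subgroup G) ∣ Module.finrank F V ∧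
      (Nontrivial V → Nat.card (P : Subgroup G) ≤ Module.finrank F V) := by
  have : Fact p.Prime := ⟨hp⟩
  exact card_sylow_dvd_finrank_projective_general P.isPGroup'
end
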